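/- Let R be an integral domain that is a finitely generated ℂ-algebra, and let C• be a chain complex of countably generated R-modules. Then there exists a countable family (f_i)_{i∈ℕ} of nonzero elements of R such that for every maximal ideal 𝔪 of R satisfying f_i ∉ 𝔪 for all i, the canonical homomorphism H_n(C•) ⊗_R (R/𝔪) → H_n(C• ⊗_R (R/𝔪)) is an isomorphism for every n. -/

import Mathlib

/-!
Call a submodule `N ⊆ M` pure at an ideal `𝔪` if `N ∩ 𝔪M = 𝔪N`, i.e. if
`N/𝔪N → M/𝔪M` is injective. The theorem reduces to purity: every element of `M ⊗ R/𝔪` has the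
form `x ⊗ 1`, which vanishes iff `x ∈ 𝔪M`, so a diagram chase with elements shows that the base
change map in position `n + 1` is injective when the cycles are pure in `C (n + 1)`, and
surjective when the image of `d n` is pure in `C n`.

Over a domain, a submodule `N` of a countably generated module `M` is pure at every maximal ideal
avoiding a suitable countable set of nonzero elements. Choose `F ⊆ M` maximal among the submodules
disjoint from `N`. By maximality every generator `x` of `M` has a multiple `a • x ∈ N ⊔ F` with
`a ≠ 0`; the chosen multipliers `a` form the countable set. If `𝔪` avoids them, every element of
`M` is carried into `N ⊔ F` by a scalar outside `𝔪`, and as such scalars are invertible modulo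
`𝔪`, the submodule `N ⊔ F` is pure in `M`. Finally `N` is a direct summand of `N ⊔ F`, hence pure
in it.
-/

open TensorProduct

section ChainComplexDefs

variable (R : Type) [CommRing R]
variable (C : ℤ → Type) [∀ n, AddCommGroup (C n)] [∀ n, Module R (C n)]
variable (d : ∀ n : ℤ, C (n + 1) →ₗ[R] C n)

/-- The cycles of a chain complex `(C, d)` (with `d n : C (n+1) → C n`) in position `n + 1`. -/
def chainCycles (n : ℤ) : Submodule R (C (n + 1)) := LinearMap.ker (d n)

/-- The boundaries of the chain complex in position `n + 1`, viewed inside the cycles. -/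
def chainBoundaries (n : ℤ) : Submodule R (chainCycles R C d n) :=
  (LinearMap.range (d (n + 1))).comap (chainCycles R C d n).subtype

/-- The homology of the chain complex in position `n + 1` (as `n` ranges over `ℤ`, this
is the homology in every position). -/
abbrev chainHomology (n : ℤ) :=
  chainCycles R C d n ⧸ chainBoundaries R C d n

variable (k : Type) [AddCommGroup k] [Module R k]

/-- The natural map from (cycles of `C`) ⊗ k to the cycles of the tensored complex
`C ⊗[R] k` (whose differentials are `d ⊗ 1`). -/
noncomputable def cyclesTensorToTensorCycles (n : ℤ) :
    (chainCycles R C d n) ⊗[R] k →ₗ[R]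
      chainCycles R (fun m => C m ⊗[R] k) (fun m => (d m).rTensor k) n := by
  refine LinearMap.codRestrict _ (((chainCycles R C d n).subtype).rTensor k) ?_
  intro x
  have h0 : (d n).comp (chainCycles R C d n).subtype = 0 := by
    ext z
    exact z.2
  have : ((d n).rTensor k).comp (((chainCycles R C d n).subtype).rTensor k) = 0 := by
    rw [← LinearMap.rTensor_comp, h0, LinearMap.rTensor_zero]
  exact LinearMap.congr_fun this x

/-- The canonical homomorphism `H_{n+1}(C) ⊗[R] k → H_{n+1}(C ⊗[R] k)` induced by
functoriality of the tensor product: the class of a cycle `z` tensored with `c` is sent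
to the class of the cycle `z ⊗ c` of the tensored complex. -/
noncomputable def homologyBaseChange (n : ℤ) :
    (chainHomology R C d n) ⊗[R] k →ₗ[R]
      chainHomology R (fun m => C m ⊗[R] k) (fun m => (d m).rTensor k) n := by
  refine TensorProduct.lift (Submodule.liftQ (chainBoundaries R C d n)
    (TensorProduct.curry
      ((chainBoundaries R (fun m => C m ⊗[R] k) (fun m => (d m).rTensor k) n).mkQ ∘ₗ
        cyclesTensorToTensorCycles R C d k n)) ?_)
  intro z hz
  obtain ⟨w, hw⟩ := hz
  rw [LinearMap.mem_ker]
  ext c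
  simp only [TensorProduct.curry_apply, LinearMap.comp_apply, LinearMap.zero_apply]
  rw [Submodule.mkQ_apply, Submodule.Quotient.mk_eq_zero]
  refine Submodule.mem_comap.2 ⟨w ⊗ₜ[R] c, ?_⟩
  show (d (n + 1)).rTensor k (w ⊗ₜ[R] c) =
    ((chainCycles R C d n).subtype).rTensor k (z ⊗ₜ[R] c)
  rw [LinearMap.rTensor_tmul, LinearMap.rTensor_tmul, hw]

end ChainComplexDefs

section GenericPurity

variable {R M : Type*} [CommRing R] [AddCommGroup M] [Module R M]

/-- Up to torsion, every submodule of a module over a domain has a complement: take `F` maximal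
among the submodules disjoint from `N`. -/
lemma exists_disjoint_torsion_cokernel [IsDomain R] (N : Submodule R M) :
    ∃ F : Submodule R M, Disjoint F N ∧ ∀ x : M, ∃ a : R, a ≠ 0 ∧ a • x ∈ N ⊔ F := by
  obtain ⟨F, hF⟩ := zorn_le₀ {F : Submodule R M | Disjoint F N} (by
    intro c hc hchain
    exact ⟨sSup c, (hchain.directedOn.disjoint_sSup_left).2 fun b hb => hc hb,
      fun z hz => le_sSup hz⟩)
  have hdisj : Disjoint F N := hF.prop
  refine ⟨F, hdisj, fun x => ?_⟩
  by_contra! hx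
  have hle : F ⊔ Submodule.span R {x} ≤ F := by
    refine hF.le_of_ge ?_ le_sup_left
    change Disjoint _ _
    rw [Submodule.disjoint_def]
    intro y hy hyN
    obtain ⟨f, hf, z, hz, rfl⟩ := Submodule.mem_sup.1 hy
    obtain ⟨a, rfl⟩ := Submodule.mem_span_singleton.1 hz
    by_cases ha : a = 0
    · subst ha
      rw [zero_smul, add_zero] at hyN ⊢
      exact Submodule.disjoint_def.1 hdisj f hf hyN
    · refine absurd ?_ (hx a ha)
      have h := (N ⊔ F).sub_mem (Submodule.mem_sup_left hyN) (Submodule.mem_sup_right hf)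
      rwa [add_sub_cancel_left] at h
  have hxF : x ∈ F := hle (Submodule.mem_sup_right (Submodule.mem_span_singleton_self x))
  exact hx 1 one_ne_zero (by rw [one_smul]; exact Submodule.mem_sup_right hxF)

/-- If every element of `M` is carried into `P` by a scalar outside the maximal ideal `𝔪`, then
`P ∩ 𝔪M ⊆ 𝔪P`: the scalars outside `𝔪` are invertible modulo `𝔪`. -/
lemma mem_smul_of_torsion_cokernel {𝔪 : Ideal R} (hm : 𝔪.IsMaximal) (P : Submodule R M)
    (hP : ∀ x : M, ∃ s, s ∉ 𝔪 ∧ s • x ∈ P) {x : M} (hxP : x ∈ P)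
    (hx : x ∈ 𝔪 • (⊤ : Submodule R M)) : x ∈ 𝔪 • P := by
  obtain ⟨s, hs, hsx⟩ : ∃ s, s ∉ 𝔪 ∧ s • x ∈ 𝔪 • P := by
    clear hxP
    induction hx using Submodule.smul_induction_on' with
    | smul r hr y _ =>
      obtain ⟨s, hs, hsy⟩ := hP y
      exact ⟨s, hs, by rw [smul_comm]; exact Submodule.smul_mem_smul hr hsy⟩
    | add y _ z _ hy hz =>
      obtain ⟨s, hs, hsy⟩ := hy
      obtain ⟨t, ht, htz⟩ := hz
      refine ⟨s * t, fun h => (hm.isPrime.mem_or_mem h).elim hs ht, ?_⟩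
      rw [smul_add]
      refine Submodule.add_mem _ ?_ ?_
      · rw [mul_comm, mul_smul]; exact Submodule.smul_mem _ _ hsy
      · rw [mul_smul]; exact Submodule.smul_mem _ _ htz
  obtain ⟨r, i, hi, h1⟩ := hm.exists_inv hs
  have hxx : x = r • s • x + i • x := by
    rw [smul_smul, ← add_smul, h1, one_smul]
  rw [hxx]
  exact Submodule.add_mem _ (Submodule.smul_mem _ _ hsx) (Submodule.smul_mem_smul hi hxP)

lemma mem_smul_of_disjoint {𝔪 : Ideal R} {N F : Submodule R M} (hd : Disjoint F N) {x : M}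
    (hxN : x ∈ N) (hx : x ∈ 𝔪 • (N ⊔ F)) : x ∈ 𝔪 • N := by
  rw [Submodule.smul_sup] at hx
  obtain ⟨a, ha, b, hb, rfl⟩ := Submodule.mem_sup.1 hx
  have hbN : b ∈ N := (N.add_mem_iff_right (Submodule.smul_le_right ha)).1 hxN
  have hb0 : b = 0 := Submodule.disjoint_def.1 hd b (Submodule.smul_le_right hb) hbN
  rwa [hb0, add_zero]

/-- Generic purity: a submodule `N` of a countably generated module over a domain satisfies
`N ∩ 𝔪M = 𝔪N` at every maximal ideal avoiding a suitable countable set of nonzero elements. -/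
lemma exists_countable_generic_pure [IsDomain R]
    (hM : ∃ S : Set M, S.Countable ∧ Submodule.span R S = ⊤) (N : Submodule R M) :
    ∃ T : Set R, T.Countable ∧ (∀ t ∈ T, t ≠ 0) ∧
      ∀ 𝔪 : Ideal R, 𝔪.IsMaximal → (∀ t ∈ T, t ∉ 𝔪) →
        ∀ x ∈ N, x ∈ 𝔪 • (⊤ : Submodule R M) → x ∈ 𝔪 • N := by
  obtain ⟨S, hSc, hS⟩ := hM
  obtain ⟨F, hd, hF⟩ := exists_disjoint_torsion_cokernel N
  choose a ha0 ha using hF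
  refine ⟨a '' S, hSc.image a, ?_, ?_⟩
  · rintro _ ⟨x, -, rfl⟩
    exact ha0 x
  intro 𝔪 hm hT x hxN hx
  refine mem_smul_of_disjoint hd hxN (mem_smul_of_torsion_cokernel hm _ (fun y => ?_)
    (Submodule.mem_sup_left hxN) hx)
  have hy : y ∈ Submodule.span R S := hS ▸ Submodule.mem_top
  induction hy using Submodule.span_induction with
  | mem y hy => exact ⟨a y, hT _ ⟨y, hy, rfl⟩, ha y⟩
  | zero => exact ⟨1, hm.isPrime.one_notMem, by simp⟩
  | add y z _ _ hy hz =>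
    obtain ⟨s, hs, hsy⟩ := hy
    obtain ⟨t, ht, htz⟩ := hz
    refine ⟨s * t, fun h => (hm.isPrime.mem_or_mem h).elim hs ht, ?_⟩
    rw [smul_add]
    refine Submodule.add_mem _ ?_ ?_
    · rw [mul_comm, mul_smul]; exact Submodule.smul_mem _ _ hsy
    · rw [mul_smul]; exact Submodule.smul_mem _ _ htz
  | smul r y _ hy =>
    obtain ⟨s, hs, hsy⟩ := hy
    exact ⟨s, hs, by rw [smul_comm]; exact Submodule.smul_mem _ _ hsy⟩

lemma tmul_one_eq_zero_iff (I : Ideal R) (x : M) :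
    x ⊗ₜ[R] (1 : R ⧸ I) = 0 ↔ x ∈ I • (⊤ : Submodule R M) := by
  rw [← TensorProduct.tensorQuotEquivQuotSMul_symm_mk, LinearEquiv.map_eq_zero_iff,
    Submodule.Quotient.mk_eq_zero]

lemma exists_tmul_one_eq (I : Ideal R) (t : M ⊗[R] (R ⧸ I)) :
    ∃ x : M, x ⊗ₜ[R] (1 : R ⧸ I) = t := by
  obtain ⟨x, hx⟩ := Submodule.Quotient.mk_surjective _ (TensorProduct.tensorQuotEquivQuotSMul M I t)
  refine ⟨x, ?_⟩
  rw [← TensorProduct.tensorQuotEquivQuotSMul_symm_mk, hx, LinearEquiv.symm_apply_apply]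

end GenericPurity

section BaseChange

variable {R : Type} [CommRing R]
variable {C : ℤ → Type} [∀ n, AddCommGroup (C n)] [∀ n, Module R (C n)]
variable {d : ∀ n : ℤ, C (n + 1) →ₗ[R] C n}

lemma homologyBaseChange_mk_tmul (k : Type) [AddCommGroup k] [Module R k] (n : ℤ)
    (z : chainCycles R C d n) (c : k) :
    homologyBaseChange R C d k n ((chainBoundaries R C d n).mkQ z ⊗ₜ[R] c) =
      (chainBoundaries R (fun m => C m ⊗[R] k) (fun m => (d m).rTensor k) n).mkQ
        (cyclesTensorToTensorCycles R C d k n (z ⊗ₜ[R] c)) :=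
  rfl

lemma coe_cyclesTensorToTensorCycles_tmul (k : Type) [AddCommGroup k] [Module R k] (n : ℤ)
    (z : chainCycles R C d n) (c : k) :
    (cyclesTensorToTensorCycles R C d k n (z ⊗ₜ[R] c) : C (n + 1) ⊗[R] k) = (z : C (n + 1)) ⊗ₜ c :=
  rfl

/-- Purity of the cycles in `C (n + 1)` makes the base change map injective. -/
lemma homologyBaseChange_injective (hd : ∀ n, (d n).comp (d (n + 1)) = 0) (I : Ideal R) (n : ℤ)
    (hZ : ∀ x ∈ LinearMap.ker (d n), x ∈ I • (⊤ : Submodule R (C (n + 1))) →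
      x ∈ I • LinearMap.ker (d n)) :
    Function.Injective (homologyBaseChange R C d (R ⧸ I) n) := by
  rw [injective_iff_map_eq_zero]
  intro t ht
  obtain ⟨h, rfl⟩ := exists_tmul_one_eq I t
  obtain ⟨z, rfl⟩ := (chainBoundaries R C d n).mkQ_surjective h
  rw [homologyBaseChange_mk_tmul, Submodule.mkQ_apply, Submodule.Quotient.mk_eq_zero] at ht
  obtain ⟨u, hu⟩ := Submodule.mem_comap.1 ht
  obtain ⟨w, rfl⟩ := exists_tmul_one_eq I u
  have hu' : d (n + 1) w ⊗ₜ[R] (1 : R ⧸ I) = (z : C (n + 1)) ⊗ₜ[R] (1 : R ⧸ I) := hu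
  -- `z` agrees with the boundary `d w` modulo `I • C (n + 1)`, hence modulo `I` times the cycles.
  have hb : d (n + 1) w ∈ chainCycles R C d n := LinearMap.congr_fun (hd n) w
  have hzw : (z : C (n + 1)) - d (n + 1) w ∈ I • LinearMap.ker (d n) := by
    refine hZ _ ((LinearMap.ker (d n)).sub_mem z.2 hb) ((tmul_one_eq_zero_iff I _).1 ?_)
    rw [TensorProduct.sub_tmul, hu', sub_self]
  have hmem : z - ⟨d (n + 1) w, hb⟩ ∈ I • (⊤ : Submodule R (chainCycles R C d n)) := by
    rw [Submodule.mem_smul_top_iff]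
    exact hzw
  have hcls : (chainBoundaries R C d n).mkQ z
      = (chainBoundaries R C d n).mkQ (z - ⟨d (n + 1) w, hb⟩) := by
    rw [map_sub, eq_comm, sub_eq_self, Submodule.mkQ_apply, Submodule.Quotient.mk_eq_zero]
    exact ⟨w, rfl⟩
  rw [tmul_one_eq_zero_iff, hcls]
  have := Submodule.mem_map_of_mem (f := (chainBoundaries R C d n).mkQ) hmem
  rw [Submodule.map_smul''] at this
  exact Submodule.smul_mono le_rfl le_top this

/-- Purity of the image of `d n` in `C n` makes the base change map surjective: it allows a cycle
of `C ⊗ R/I` to be lifted to a cycle of `C`. -/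
lemma homologyBaseChange_surjective (I : Ideal R) (n : ℤ)
    (hB : ∀ x ∈ LinearMap.range (d n), x ∈ I • (⊤ : Submodule R (C n)) →
      x ∈ I • LinearMap.range (d n)) :
    Function.Surjective (homologyBaseChange R C d (R ⧸ I) n) := by
  intro y
  obtain ⟨⟨y, hy⟩, rfl⟩ := Submodule.mkQ_surjective _ y
  obtain ⟨c, rfl⟩ := exists_tmul_one_eq I y
  have hy' : d n c ⊗ₜ[R] (1 : R ⧸ I) = 0 := hy
  have hdc := hB _ ⟨c, rfl⟩ ((tmul_one_eq_zero_iff I _).1 hy')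
  rw [← Submodule.map_top, ← Submodule.map_smul''] at hdc
  obtain ⟨c', hc', hcc⟩ := hdc
  have hz : c - c' ∈ chainCycles R C d n := by
    change d n (c - c') = 0
    rw [map_sub, hcc, sub_self]
  refine ⟨(chainBoundaries R C d n).mkQ ⟨c - c', hz⟩ ⊗ₜ[R] 1, ?_⟩
  rw [homologyBaseChange_mk_tmul]
  congr 1
  apply Subtype.ext
  rw [coe_cyclesTensorToTensorCycles_tmul]
  change (c - c') ⊗ₜ[R] (1 : R ⧸ I) = c ⊗ₜ[R] 1
  rw [TensorProduct.sub_tmul, (tmul_one_eq_zero_iff I c').2 hc', sub_zero]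

end BaseChange

/-- **Generic base change for homology.**
Let `R` be an integral domain that is a finitely generated `ℂ`-algebra and let `(C, d)` be a
chain complex of countably generated `R`-modules.  Then there is a countable family `(f i)`
of nonzero elements of `R` such that for every maximal ideal `𝔪` of `R` avoiding all the
`f i`, the canonical homomorphism `H_n(C) ⊗_R (R/𝔪) → H_n(C ⊗_R (R/𝔪))` is an isomorphism
for every `n`. -/
theorem generic_homology_base_change_isomorphism
    (R : Type) [CommRing R] [IsDomain R] [Algebra ℂ R] [Algebra.FiniteType ℂ R]
    (C : ℤ → Type) [∀ n, AddCommGroup (C n)] [∀ n, Module R (C n)]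
    (hC : ∀ n, ∃ S : Set (C n), S.Countable ∧ Submodule.span R S = ⊤)
    (d : ∀ n : ℤ, C (n + 1) →ₗ[R] C n)
    (hd : ∀ n, (d n).comp (d (n + 1)) = 0) :
    ∃ f : ℕ → R, (∀ i, f i ≠ 0) ∧
      ∀ 𝔪 : Ideal R, 𝔪.IsMaximal → (∀ i, f i ∉ 𝔪) →
        ∀ n : ℤ, Function.Bijective (homologyBaseChange R C d (R ⧸ 𝔪) n) := by
  choose T hTc hT0 hT using fun n => exists_countable_generic_pure (hC (n + 1)) (LinearMap.ker (d n))
  choose U hUc hU0 hU using fun n => exists_countable_generic_pure (hC n) (LinearMap.range (d n))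
  -- The element `1` only serves to make the set nonempty, so that a sequence enumerates it.
  obtain ⟨f, hf⟩ := (((Set.countable_iUnion hTc).union (Set.countable_iUnion hUc)).insert
    (1 : R)).exists_eq_range (Set.insert_nonempty _ _)
  refine ⟨f, fun i => ?_, fun 𝔪 hm hfm n => ?_⟩
  · have hi : f i ∈ Set.range f := ⟨i, rfl⟩
    rw [← hf] at hi
    rcases hi with hi | hi | hi
    · rw [hi]
      exact one_ne_zero
    · obtain ⟨n, hn⟩ := Set.mem_iUnion.1 hi
      exact hT0 n _ hn
    · obtain ⟨n, hn⟩ := Set.mem_iUnion.1 hi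
      exact hU0 n _ hn
  · have hav : ∀ t ∈ Set.range f, t ∉ 𝔪 := by
      rintro _ ⟨i, rfl⟩
      exact hfm i
    rw [← hf] at hav
    exact ⟨homologyBaseChange_injective hd 𝔪 n (hT n 𝔪 hm fun t ht =>
        hav t (Or.inr (Or.inl (Set.mem_iUnion.2 ⟨n, ht⟩)))),
      homologyBaseChange_surjective 𝔪 n (hU n 𝔪 hm fun t ht =>
        hav t (Or.inr (Or.inr (Set.mem_iUnion.2 ⟨n, ht⟩))))⟩
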